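/- arXiv:2409.16047 — 3 statements merged into one kernel-verified Lean document; each statement's English description precedes it below -/
import Mathlib

section
/- Let ε > 0, α ∈ [1,2], β ∈ [0, 1/2], f₀ ∈ ℝ, and define the regularized model m : ℝ → ℝ by m(s) = f₀ − (1+β)αε·s + (β/2)·√(αε)·s² + (1/3)|s|³. Then s* = √(αε) satisfies m′(s*) = 0 and s* is a global minimizer of m over ℝ, i.e. m(s*) ≤ m(s) for all s ∈ ℝ. -/
/-- For the cubic-regularized model of the slow-convergence example in the
case `q = 1` (`σ = 2`), namely
`m s = f₀ − (1+β)αε·s + (β/2)·√(αε)·s² + (1/3)|s|³`,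
the step `s* = √(αε)` is a critical point and a global minimizer of `m`. -/
theorem ar2_model_global_min_q1 (ε α β f₀ : ℝ) (hε : 0 < ε)
    (hα : α ∈ Set.Icc (1 : ℝ) 2) (hβ : β ∈ Set.Icc (0 : ℝ) (1 / 2)) :
    let m : ℝ → ℝ := fun s =>
      f₀ - (1 + β) * α * ε * s + β / 2 * Real.sqrt (α * ε) * s ^ 2
        + 1 / 3 * |s| ^ 3
    deriv m (Real.sqrt (α * ε)) = 0 ∧
    ∀ s : ℝ, m (Real.sqrt (α * ε)) ≤ m s := by
  intro m
  have hmin : ∀ s : ℝ, m (Real.sqrt (α * ε)) ≤ m s := by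
    intro s
    have hpos : 0 ≤ α * ε := mul_nonneg (by linarith [hα.1]) hε.le
    have hr : 0 ≤ Real.sqrt (α * ε) := Real.sqrt_nonneg _
    have hsq : Real.sqrt (α * ε) ^ 2 = α * ε := Real.sq_sqrt hpos
    have hm : ∀ x, m x = f₀ - (1 + β) * (α * ε) * x + β / 2 * Real.sqrt (α * ε) * x ^ 2
        + 1 / 3 * |x| ^ 3 := by
      intro x
      simp only [m]
      ring
    rw [hm, hm, abs_of_nonneg hr]
    generalize Real.sqrt (α * ε) = r at *
    rw [← hsq]
    have h1 : 0 ≤ β / 2 * r * (s - r) ^ 2 :=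
      mul_nonneg (mul_nonneg (by linarith [hβ.1]) hr) (sq_nonneg _)
    have h2 : 0 ≤ (|s| - r) ^ 2 * (|s| + 2 * r) :=
      mul_nonneg (sq_nonneg _) (by linarith [abs_nonneg s])
    have h3 : 0 ≤ r ^ 2 * (|s| - s) :=
      mul_nonneg (sq_nonneg _) (by linarith [le_abs_self s])
    linarith
  refine ⟨?_, hmin⟩
  have hl : IsLocalMin m (Real.sqrt (α * ε)) := Filter.Eventually.of_forall hmin
  exact hl.deriv_eq_zero
end

section
/- Let q ∈ {1,2}, p = 3 − q, ε ∈ (0, 1/4], α ∈ [1, 2], β ∈ [0, 1/2], η ∈ (0, 1), and β₀ ∈ ℝ with |β₀| ≤ (1−η)/4. Then the per-iteration objective decrease D = (αε)^{3/p}·((1+β)/q − β/p − β₀) satisfies (η/4)·(αε)^{3/p} ≤ D ≤ (3/2)·(2ε)^{3/p}. In particular D > 0. -/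
/-- For `q ∈ {1,2}`, `p = 3 − q`, `ε ∈ (0, 1/4]`, `α ∈ [1,2]`, `β ∈ [0,1/2]`,
`η ∈ (0,1)` and `|β₀| ≤ (1−η)/4`, the per-iteration objective decrease
`D = (αε)^{3/p}·((1+β)/q − β/p − β₀)` satisfies
`(η/4)·(αε)^{3/p} ≤ D ≤ (3/2)·(2ε)^{3/p}`; in particular `D > 0`. -/
theorem per_iteration_decrease_bounds (q p : ℕ) (hq : q = 1 ∨ q = 2)
    (hp : p = 3 - q) (ε α β η β₀ : ℝ) (hε : ε ∈ Set.Ioc (0 : ℝ) (1 / 4))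
    (hα : α ∈ Set.Icc (1 : ℝ) 2) (hβ : β ∈ Set.Icc (0 : ℝ) (1 / 2))
    (hη : η ∈ Set.Ioo (0 : ℝ) 1) (hβ₀ : |β₀| ≤ (1 - η) / 4) :
    let D : ℝ := (α * ε) ^ ((3 : ℝ) / p) * ((1 + β) / q - β / p - β₀)
    η / 4 * (α * ε) ^ ((3 : ℝ) / p) ≤ D ∧
    D ≤ 3 / 2 * (2 * ε) ^ ((3 : ℝ) / p) ∧
    0 < D := by
  intro D
  obtain ⟨hε0, hε1⟩ := hε
  obtain ⟨hα1, hα2⟩ := hα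
  obtain ⟨hβ1, hβ2⟩ := hβ
  obtain ⟨hη1, hη2⟩ := hη
  obtain ⟨h1, h2⟩ := abs_le.mp hβ₀
  have hx : 0 < α * ε := by positivity
  have hP : 0 < (α * ε) ^ ((3 : ℝ) / p) := Real.rpow_pos_of_pos hx _
  have hPQ : (α * ε) ^ ((3 : ℝ) / p) ≤ (2 * ε) ^ ((3 : ℝ) / p) :=
    Real.rpow_le_rpow hx.le (mul_le_mul_of_nonneg_right hα2 hε0.le) (by positivity)
  have hc : η / 4 ≤ (1 + β) / q - β / p - β₀ ∧ (1 + β) / q - β / p - β₀ ≤ 3 / 2 := by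
    rcases hq with rfl | rfl <;> subst hp <;> norm_num <;> constructor <;> linarith
  obtain ⟨hc1, hc2⟩ := hc
  refine ⟨?_, ?_, ?_⟩
  · rw [mul_comm (η / 4)]
    exact mul_le_mul_of_nonneg_left hc1 hP.le
  · calc D ≤ (α * ε) ^ ((3 : ℝ) / p) * (3 / 2) := mul_le_mul_of_nonneg_left hc2 hP.le
      _ ≤ 3 / 2 * (2 * ε) ^ ((3 : ℝ) / p) := by linarith
  · exact mul_pos hP (by linarith)
end

section
/- Let n ≥ 1 and let f : ℝⁿ → ℝ be twice continuously differentiable. Then the second-order criticality measure φ_{f,2}(x) = f(x) − min_{‖d‖≤1} (f(x) + ⟨∇f(x), d⟩ + (1/2)⟨∇²f(x)d, d⟩) is a continuous function of x. -/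
open RealInnerProductSpace

/-- For a twice continuously differentiable `f : ℝⁿ → ℝ` (`n ≥ 1`), the
second-order criticality measure
`φ_{f,2}(x) = f x − min_{‖d‖≤1} (f x + ⟪∇f x, d⟫ + (1/2)⟪∇²f x d, d⟫)`
is a continuous function of `x`. -/
theorem phi_two_continuous (n : ℕ) (hn : 1 ≤ n)
    (f : EuclideanSpace ℝ (Fin n) → ℝ) (hf : ContDiff ℝ 2 f) :
    Continuous (fun x : EuclideanSpace ℝ (Fin n) =>
      f x - sInf ((fun d : EuclideanSpace ℝ (Fin n) =>
        f x + ⟪gradient f x, d⟫ + 1 / 2 * ⟪fderiv ℝ (gradient f) x d, d⟫) ''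
          Metric.closedBall 0 1)) := by
  have hg : ContDiff ℝ 1 (gradient f) := by
    have h1 : ContDiff ℝ 1 (fderiv ℝ f) := hf.fderiv_right (by norm_num)
    exact (InnerProductSpace.toDual ℝ (EuclideanSpace ℝ (Fin n))).symm.toContinuousLinearEquiv.contDiff.comp h1
  have hH : Continuous (fderiv ℝ (gradient f)) := hg.continuous_fderiv (by norm_num)
  have hgc : Continuous (gradient f) := hg.continuous
  have hfc : Continuous f := hf.continuous
  refine hfc.sub ?_
  refine IsCompact.continuous_sInf (f := fun x d : EuclideanSpace ℝ (Fin n) =>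
    f x + ⟪gradient f x, d⟫ + 1 / 2 * ⟪fderiv ℝ (gradient f) x d, d⟫)
    (isCompact_closedBall 0 1) ?_
  have h2 : Continuous (fun p : EuclideanSpace ℝ (Fin n) × EuclideanSpace ℝ (Fin n) =>
      fderiv ℝ (gradient f) p.1 p.2) := (hH.comp continuous_fst).clm_apply continuous_snd
  exact ((hfc.comp continuous_fst).add ((hgc.comp continuous_fst).inner continuous_snd)).add
    (continuous_const.mul (h2.inner continuous_snd))
end
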